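/- arXiv:2202.08872 — 4 statements merged into one kernel-verified Lean document; each statement's English description precedes it below -/
import Mathlib

section
/- Fix 0 < r < 1. Let H and K be complex Hilbert spaces, let J ∈ 𝒫𝔸_r[H], let F ∈ ℙ𝔸_r[K], and let V : H → K be a linear isometry such that V J = F V. Then the range of V reduces F; that is, the range of V is invariant under both F and F*. (In other words, every element of 𝒫𝔸_r is extremal in the Agler sense: every lift of J to an element of ℙ𝔸_r is trivial.) -/
open ContinuousLinearMap

noncomputable section

/-- `P` is an orthogonal projection: self-adjoint and idempotent. -/
def IsOrthProj {H : Type*} [NormedAddCommGroup H] [InnerProductSpace ℂ H] [CompleteSpace H]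
    (P : H →L[ℂ] H) : Prop :=
  IsSelfAdjoint P ∧ P * P = P

/-- Membership in `𝒫𝔸_r`: `J = U (r P₊ + r⁻¹ P₋)` with `P₊, P₋` complementary orthogonal
projections and `U` a unitary that is block upper triangular (`P₋ U P₊ = 0`). -/
def memPAscript (r : ℝ) {H : Type*} [NormedAddCommGroup H] [InnerProductSpace ℂ H]
    [CompleteSpace H] (J : H →L[ℂ] H) : Prop :=
  ∃ Pp Pm U : H →L[ℂ] H, IsOrthProj Pp ∧ IsOrthProj Pm ∧ Pp + Pm = 1 ∧
    adjoint U * U = 1 ∧ U * adjoint U = 1 ∧ Pm * U * Pp = 0 ∧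
    J = U * ((r : ℂ) • Pp + (r : ℂ)⁻¹ • Pm)

/-!
Write `X = F*V - VJ*` and `D = (r⁻² + r²) - F*F - F⁻*F⁻¹`. The range of `V` is invariant under `F*`
if `X = 0`, and `V*X = 0` in any case. Where the quadratic form of `D` vanishes at `Vx`, positivity
forces `D V x = 0`; applying `F*` and discarding the range of `V` turns this into
`F* X J x = (r⁻² + r²) X x - X J*J x`. For `J = U (r P₊ + r⁻¹ P₋)` this applies to `x` in the range
of `U P₊`, where it reads `X x = r³ F* X U x`, and to `x` in the range of `P₋`, where it reads
`X x = r⁻³ F* X U x`. As `F` and `F⁻¹` have norm at most `r⁻¹`, and as the range of `P₊` is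
invariant under `U` and that of `P₋` under `U*`, both `X U P₊` and `X U P₋` are fixed by linear maps
of norm at most `r² < 1`, hence vanish.
-/

section Operators

variable {𝕜 E F : Type*}

lemma isPositive_apply_eq_zero_of_re_inner_eq_zero [RCLike 𝕜] [NormedAddCommGroup E]
    [InnerProductSpace 𝕜 E] {T : E →ₗ[𝕜] E} (hT : T.IsPositive) {x : E}
    (hx : RCLike.re (inner 𝕜 (T x) x) = 0) : T x = 0 := by
  let core : PreInnerProductSpace.Core 𝕜 E :=
    { inner := fun y z => inner 𝕜 (T y) z
      conj_inner_symm := fun y z => by rw [inner_conj_symm, hT.isSymmetric y z]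
      re_inner_nonneg := hT.re_inner_nonneg_left
      add_left := fun y z w => by rw [map_add, inner_add_left]
      smul_left := fun y z a => by rw [map_smul, inner_smul_left] }
  have cauchy_schwarz := InnerProductSpace.Core.inner_mul_inner_self_le (c := core) x (T x)
  change ‖inner 𝕜 (T x) (T x)‖ * ‖inner 𝕜 (T (T x)) x‖ ≤
    RCLike.re (inner 𝕜 (T x) x) * RCLike.re (inner 𝕜 (T (T x)) (T x)) at cauchy_schwarz
  rw [hT.isSymmetric (T x) x, hx, zero_mul] at cauchy_schwarz
  rw [← inner_self_eq_zero (𝕜 := 𝕜), ← norm_eq_zero]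
  exact mul_self_eq_zero.mp (le_antisymm cauchy_schwarz (mul_self_nonneg _))

lemma opNorm_le_of_norm_sq_add_norm_sq_le [NontriviallyNormedField 𝕜]
    [SeminormedAddCommGroup E] [NormedSpace 𝕜 E] {A B : E →L[𝕜] E} (hAB : A * B = 1)
    {s : ℝ} (hs : 1 ≤ s) (h : ∀ x, ‖A x‖ ^ 2 + ‖B x‖ ^ 2 ≤ (s ^ 2 + s⁻¹ ^ 2) * ‖x‖ ^ 2) :
    ‖A‖ ≤ s := by
  by_contra! hsA
  have hA : 0 < ‖A‖ := by linarith
  have norm_apply_le (x : E) : ‖A x‖ ≤ √(s ^ 2 + s⁻¹ ^ 2 - ‖A‖⁻¹ ^ 2) * ‖x‖ := by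
    have hBx : ‖A‖⁻¹ * ‖x‖ ≤ ‖B x‖ := by
      rw [inv_mul_le_iff₀ hA]
      simpa only [← mul_apply_eq_comp, hAB, one_apply_eq_self] using A.le_opNorm (B x)
    have hBx_sq : (‖A‖⁻¹ * ‖x‖) ^ 2 ≤ ‖B x‖ ^ 2 := by gcongr
    calc ‖A x‖ ≤ √((s ^ 2 + s⁻¹ ^ 2 - ‖A‖⁻¹ ^ 2) * ‖x‖ ^ 2) :=
          Real.le_sqrt_of_sq_le (by linarith [h x])
      _ = _ := by rw [Real.sqrt_mul' _ (sq_nonneg _), Real.sqrt_sq (norm_nonneg x)]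
  have norm_sq_le : ‖A‖ ^ 2 ≤ s ^ 2 + s⁻¹ ^ 2 - ‖A‖⁻¹ ^ 2 :=
    (Real.le_sqrt' hA).mp (A.opNorm_le_bound (Real.sqrt_nonneg _) norm_apply_le)
  -- `t ↦ t + t⁻¹` is strictly increasing for `t ≥ 1`; apply this to `t = s ^ 2` and `t = ‖A‖ ^ 2`.
  have factored : (‖A‖ ^ 2 - s ^ 2) * (1 - (‖A‖⁻¹ * s⁻¹) ^ 2) ≤ 0 := by
    have : (‖A‖ ^ 2 - s ^ 2) * (1 - (‖A‖⁻¹ * s⁻¹) ^ 2) =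
        ‖A‖ ^ 2 + ‖A‖⁻¹ ^ 2 - (s ^ 2 + s⁻¹ ^ 2) := by
      field_simp
      ring
    linarith
  have inv_mul_inv_lt : ‖A‖⁻¹ * s⁻¹ < 1 :=
    mul_lt_one_of_nonneg_of_lt_one_left (by positivity) (inv_lt_one_of_one_lt₀ (by linarith))
      (inv_le_one_of_one_le₀ hs)
  have : 0 < ‖A‖ ^ 2 - s ^ 2 := sub_pos.mpr (by gcongr)
  have : 0 < 1 - (‖A‖⁻¹ * s⁻¹) ^ 2 :=
    sub_pos.mpr (pow_lt_one₀ (by positivity) inv_mul_inv_lt two_ne_zero)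
  exact absurd factored (not_le.mpr (by positivity))

lemma eq_zero_of_eq_comp_comp [NontriviallyNormedField 𝕜] [SeminormedAddCommGroup E]
    [NormedSpace 𝕜 E] [NormedAddCommGroup F] [NormedSpace 𝕜 F]
    {A : F →L[𝕜] F} {B : E →L[𝕜] E} {M : E →L[𝕜] F}
    (hM : M = A ∘L M ∘L B) (hA : ‖A‖ < 1) (hB : ‖B‖ ≤ 1) : M = 0 := by
  have norm_le : ‖M‖ ≤ ‖A‖ * ‖M‖ :=
    calc ‖M‖ = ‖A ∘L M ∘L B‖ := congrArg norm hM
      _ ≤ ‖A‖ * (‖M‖ * ‖B‖) := (opNorm_comp_le _ _).trans (by gcongr; exact opNorm_comp_le _ _)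
      _ ≤ ‖A‖ * ‖M‖ := by gcongr; exact mul_le_of_le_one_right (norm_nonneg M) hB
  have : ‖M‖ ≤ 0 := by nlinarith [norm_nonneg M]
  ext x
  simpa only [zero_mul, norm_le_zero_iff, zero_apply] using M.le_of_opNorm_le this x

lemma norm_mul_le_one_of_mem_unitary [NormedRing E] [StarRing E] [CStarRing E] {u p : E}
    (hu : u ∈ unitary E) (hp : IsStarProjection p) : ‖u * p‖ ≤ 1 :=
  (CStarRing.norm_mem_unitary_mul p hu).trans_le hp.norm_le

end Operators

section PickAnnulus

variable {𝕜 K : Type*} [RCLike 𝕜] [NormedAddCommGroup K] [InnerProductSpace 𝕜 K] [CompleteSpace K]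

/-- The operator `c - F*F - F'*F'`, whose positivity for `c = r⁻² + r²` and `F' = F⁻¹` defines the
Pick annulus. -/
def pickDefect (c : ℝ) (F F' : K →L[𝕜] K) : K →L[𝕜] K :=
  (c : 𝕜) • 1 - adjoint F * F - adjoint F' * F'

/-- Membership of `F` in the Pick annulus `ℙ𝔸_r`, with the inverse `F'` of `F` as explicit data. -/
structure MemPickAnnulus (r : ℝ) (F F' : K →L[𝕜] K) : Prop where
  mul_inv : F * F' = 1
  inv_mul : F' * F = 1
  isPositive : (pickDefect (r⁻¹ ^ 2 + r ^ 2) F F').IsPositive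

lemma re_inner_pickDefect_apply_self (c : ℝ) (F F' : K →L[𝕜] K) (x : K) :
    RCLike.re (inner 𝕜 (pickDefect c F F' x) x) = c * ‖x‖ ^ 2 - ‖F x‖ ^ 2 - ‖F' x‖ ^ 2 := by
  simp only [pickDefect, sub_apply, smul_apply, one_apply_eq_self, mul_apply_eq_comp,
    inner_sub_left, adjoint_inner_left, inner_smul_left, map_sub, inner_self_eq_norm_sq,
    RCLike.conj_ofReal, RCLike.re_ofReal_mul]

namespace MemPickAnnulus

variable {r : ℝ} {F F' : K →L[𝕜] K}

lemma symm (h : MemPickAnnulus r F F') : MemPickAnnulus r F' F where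
  mul_inv := h.inv_mul
  inv_mul := h.mul_inv
  isPositive := by
    simpa only [pickDefect, sub_right_comm] using h.isPositive

lemma inv (h : MemPickAnnulus r F F') : MemPickAnnulus r⁻¹ F F' where
  mul_inv := h.mul_inv
  inv_mul := h.inv_mul
  isPositive := by
    simpa only [inv_inv, add_comm] using h.isPositive

lemma norm_le (h : MemPickAnnulus r F F') (hr0 : 0 < r) (hr1 : r ≤ 1) : ‖F‖ ≤ r⁻¹ := by
  refine opNorm_le_of_norm_sq_add_norm_sq_le h.mul_inv ((one_le_inv₀ hr0).mpr hr1) fun x => ?_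
  have := h.isPositive.re_inner_nonneg_left x
  rw [re_inner_pickDefect_apply_self] at this
  rw [inv_inv]
  linarith

lemma norm_pow_three_smul_adjoint_lt_one (h : MemPickAnnulus r F F') (hr0 : 0 < r) (hr1 : r < 1) :
    ‖(r : 𝕜) ^ 3 • adjoint F‖ < 1 :=
  calc ‖(r : 𝕜) ^ 3 • adjoint F‖ = r ^ 3 * ‖F‖ := by
        rw [norm_smul, norm_pow, RCLike.norm_of_nonneg hr0.le, LinearIsometryEquiv.norm_map]
    _ ≤ r ^ 3 * r⁻¹ := by gcongr; exact h.norm_le hr0 hr1.le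
    _ = r ^ 2 := by field_simp
    _ < 1 := pow_lt_one₀ hr0.le hr1 two_ne_zero

lemma adjoint_apply_inv_adjoint_apply (h : MemPickAnnulus r F F') (x : K) :
    adjoint F (adjoint F' x) = x := by
  have : adjoint F * adjoint F' = 1 := by
    simpa only [star_mul, star_one, star_eq_adjoint] using congrArg star h.inv_mul
  exact congr($this x)

lemma pickDefect_apply_eq_zero (h : MemPickAnnulus r F F') {x : K}
    (hx : ‖F x‖ ^ 2 + ‖F' x‖ ^ 2 = (r⁻¹ ^ 2 + r ^ 2) * ‖x‖ ^ 2) :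
    pickDefect (r⁻¹ ^ 2 + r ^ 2) F F' x = 0 :=
  isPositive_apply_eq_zero_of_re_inner_eq_zero h.isPositive.toLinearMap <| by
    rw [coe_coe, re_inner_pickDefect_apply_self]
    linarith

end MemPickAnnulus

end PickAnnulus

section Lifting

variable {𝕜 H K : Type*} [RCLike 𝕜]
  [NormedAddCommGroup H] [InnerProductSpace 𝕜 H] [CompleteSpace H]
  [NormedAddCommGroup K] [InnerProductSpace 𝕜 K] [CompleteSpace K]

/-- The obstruction `F*V - VJ*` to the range of `V` being invariant under `F*`, for a lift
`VJ = FV`. -/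
def liftDefect (V : H →L[𝕜] K) (J : H →L[𝕜] H) (F : K →L[𝕜] K) : H →L[𝕜] K :=
  adjoint F ∘L V - V ∘L adjoint J

variable {V : H →L[𝕜] K} {J : H →L[𝕜] H} {F F' : K →L[𝕜] K} {r : ℝ}

lemma adjoint_apply_eq_add_liftDefect (x : H) :
    adjoint F (V x) = V (adjoint J x) + liftDefect V J F x :=
  (add_sub_cancel _ _).symm

lemma adjoint_apply_adjoint_apply_of_lift (hlift : V ∘L J = F ∘L V) (y : K) :
    adjoint V (adjoint F y) = adjoint J (adjoint V y) := by
  have := congrArg adjoint hlift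
  rw [adjoint_comp, adjoint_comp] at this
  exact congr($this y).symm

lemma adjoint_apply_self_of_norm_map (hV : ∀ x, ‖V x‖ = ‖x‖) (x : H) : adjoint V (V x) = x :=
  congr($((norm_map_iff_adjoint_comp_self V).mp hV) x)

lemma adjoint_apply_liftDefect (hV : ∀ x, ‖V x‖ = ‖x‖) (hlift : V ∘L J = F ∘L V) (x : H) :
    adjoint V (liftDefect V J F x) = 0 := by
  change adjoint V (adjoint F (V x) - V (adjoint J x)) = 0
  rw [map_sub, adjoint_apply_adjoint_apply_of_lift hlift, adjoint_apply_self_of_norm_map hV,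
    adjoint_apply_self_of_norm_map hV, sub_self]

/-- Apply `F*` to `D (V x) = 0`, where `D` is the Pick defect, and compare the components orthogonal
to the range of `V`. -/
lemma adjoint_liftDefect_apply (hF : MemPickAnnulus r F F') (hV : ∀ x, ‖V x‖ = ‖x‖)
    (hlift : V ∘L J = F ∘L V) {x x' : H} (hx' : J x' = x)
    (hnorm : ‖J x‖ ^ 2 + ‖x'‖ ^ 2 = (r⁻¹ ^ 2 + r ^ 2) * ‖x‖ ^ 2) :
    adjoint F (liftDefect V J F (J x)) =
      ((r⁻¹ ^ 2 + r ^ 2 : ℝ) : 𝕜) • liftDefect V J F x - liftDefect V J F (adjoint J (J x)) := by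
  set c : ℝ := r⁻¹ ^ 2 + r ^ 2
  set X := liftDefect V J F with hX
  have hFV (y : H) : F (V y) = V (J y) := congr($hlift y).symm
  have hF'V : F' (V x) = V x' := by
    rw [← hx', ← hFV]
    exact congr($(hF.inv_mul) (V x'))
  have defect_eq : (c : 𝕜) • V x - adjoint F (V (J x)) - adjoint F' (V x') = 0 := by
    have hVx : ‖F (V x)‖ ^ 2 + ‖F' (V x)‖ ^ 2 = c * ‖V x‖ ^ 2 := by
      rw [hFV, hF'V, hV, hV, hV, hnorm]
    rw [← hF'V, ← hFV]
    exact hF.pickDefect_apply_eq_zero hVx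
  have adjoint_defect_eq := congrArg (adjoint F) defect_eq
  simp only [map_sub, map_smul, map_zero, hF.adjoint_apply_inv_adjoint_apply,
    adjoint_apply_eq_add_liftDefect (F := F) (V := V) (J := J), map_add, ← hX] at adjoint_defect_eq
  let y := x' + adjoint J (adjoint J (J x)) - (c : 𝕜) • adjoint J x
  have hVy : V y = (c : 𝕜) • X x - X (adjoint J (J x)) - adjoint F (X (J x)) := by
    rw [← sub_eq_zero, ← neg_eq_zero, ← adjoint_defect_eq]
    simp only [y, map_sub, map_add, map_smul]
    module
  have hy : y = 0 := by
    rw [← adjoint_apply_self_of_norm_map hV y, hVy]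
    simp only [map_sub, map_smul, adjoint_apply_adjoint_apply_of_lift hlift, hX,
      adjoint_apply_liftDefect hV hlift, smul_zero, map_zero, sub_zero]
  rw [hy, map_zero] at hVy
  exact (sub_eq_zero.mp hVy.symm).symm

end Lifting

section RadialPart

variable (𝕜 : Type*) {A : Type*} [RCLike 𝕜] [Ring A] [Algebra 𝕜 A] (r : ℝ) {p : A}

/-- The factor `r P₊ + r⁻¹ P₋` of an element of `𝒫𝔸_r`, with `p = P₊` and `1 - p = P₋`. -/
def radialPart (p : A) : A :=
  (r : 𝕜) • p + (r : 𝕜)⁻¹ • (1 - p)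

lemma radialPart_mul_self (hp : IsIdempotentElem p) : radialPart 𝕜 r p * p = (r : 𝕜) • p := by
  rw [radialPart, add_mul, smul_mul_assoc, smul_mul_assoc, hp.eq, hp.one_sub_mul_self, smul_zero,
    add_zero]

lemma radialPart_mul_one_sub (hp : IsIdempotentElem p) :
    radialPart 𝕜 r p * (1 - p) = (r : 𝕜)⁻¹ • (1 - p) := by
  rw [radialPart, add_mul, smul_mul_assoc, smul_mul_assoc, hp.mul_one_sub_self, hp.one_sub.eq,
    smul_zero, zero_add]

lemma isSelfAdjoint_radialPart [StarRing A] [StarModule 𝕜 A] (hp : IsSelfAdjoint p) :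
    IsSelfAdjoint (radialPart 𝕜 r p) := by
  have hr : IsSelfAdjoint (r : 𝕜) := RCLike.conj_ofReal r
  exact (hr.smul hp).add (hr.inv₀.smul (.sub (.one _) hp))

end RadialPart

section Extremality

variable {𝕜 H K : Type*} [RCLike 𝕜]
  [NormedAddCommGroup H] [InnerProductSpace 𝕜 H] [CompleteSpace H]
  [NormedAddCommGroup K] [InnerProductSpace 𝕜 K] [CompleteSpace K]
  {V : H →L[𝕜] K} {F F' : K →L[𝕜] K} {U D P : H →L[𝕜] H} {r : ℝ}

lemma liftDefect_apply_eq_smul_adjoint_apply (hr : r ≠ 0) (hF : MemPickAnnulus r F F')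
    (hV : ∀ x, ‖V x‖ = ‖x‖) (hU : U ∈ unitary (H →L[𝕜] H)) (hD : IsSelfAdjoint D)
    (hlift : V ∘L (U * D) = F ∘L V) {x : H} (hx : D x = (r : 𝕜) • x)
    (hUx : D (adjoint U x) = (r : 𝕜) • adjoint U x) :
    liftDefect V (U * D) F x = (r : 𝕜) ^ 3 • adjoint F (liftDefect V (U * D) F (U x)) := by
  have hr' : (r : 𝕜) ≠ 0 := RCLike.ofReal_ne_zero.mpr hr
  have adjoint_U_apply (y : H) : adjoint U (U y) = y := congr($(Unitary.star_mul_self_of_mem hU) y)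
  have U_adjoint_apply (y : H) : U (adjoint U y) = y := congr($(Unitary.mul_star_self_of_mem hU) y)
  have hJx : (U * D) x = (r : 𝕜) • U x := by rw [mul_apply_eq_comp, hx, map_smul]
  have hpreimage : (U * D) ((r : 𝕜)⁻¹ • adjoint U x) = x := by
    rw [mul_apply_eq_comp, map_smul, hUx, inv_smul_smul₀ hr', U_adjoint_apply]
  have hJJx : adjoint (U * D) ((U * D) x) = (r : 𝕜) ^ 2 • x := by
    have hadj : adjoint (U * D) = D * adjoint U := by
      simp only [← star_eq_adjoint, star_mul, hD.star_eq]
    rw [hadj, hJx, mul_apply_eq_comp, map_smul, adjoint_U_apply, map_smul, hx, smul_smul, sq]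
  have hUx_norm : ‖adjoint U x‖ = ‖x‖ := norm_map_of_mem_unitary (Unitary.star_mem hU) x
  have hnorm : ‖(U * D) x‖ ^ 2 + ‖(r : 𝕜)⁻¹ • adjoint U x‖ ^ 2 =
      (r⁻¹ ^ 2 + r ^ 2) * ‖x‖ ^ 2 := by
    rw [hJx, norm_smul, norm_smul, norm_map_of_mem_unitary hU, hUx_norm, mul_pow, mul_pow,
      norm_inv, RCLike.norm_ofReal, inv_pow, sq_abs]
    ring
  have key := adjoint_liftDefect_apply hF hV hlift hpreimage hnorm
  rw [hJJx, hJx, map_smul, map_smul, map_smul, ← sub_smul] at key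
  rw [pow_succ, mul_smul, key, smul_smul]
  push_cast
  rw [add_sub_cancel_right, ← mul_pow, mul_inv_cancel₀ hr', one_pow, one_smul]

/-- With `X` the lift defect, `X U P = r³ F* (X U P) (U P)`, which is a strict contraction in
`X U P`. -/
lemma liftDefect_comp_eq_zero_of_invariant (hr0 : 0 < r) (hr1 : r < 1)
    (hF : MemPickAnnulus r F F') (hV : ∀ x, ‖V x‖ = ‖x‖) (hU : U ∈ unitary (H →L[𝕜] H))
    (hD : IsSelfAdjoint D) (hlift : V ∘L (U * D) = F ∘L V) (hP : IsStarProjection P)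
    (hDP : D * P = (r : 𝕜) • P) (hUP : P * U * P = U * P) :
    liftDefect V (U * D) F ∘L (U * P) = 0 := by
  have hDP_apply {x : H} (hx : P x = x) : D x = (r : 𝕜) • x := by
    simpa only [mul_apply_eq_comp, smul_apply, hx] using congr($hDP x)
  have hPP (x : H) : P (P x) = P x := congr($(hP.isIdempotentElem) x)
  have hUPx (x : H) : P (U (P x)) = U (P x) := congr($hUP x)
  have adjoint_U_apply (x : H) : adjoint U (U x) = x := congr($(Unitary.star_mul_self_of_mem hU) x)
  refine eq_zero_of_eq_comp_comp (B := U * P) ?_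
    (hF.norm_pow_three_smul_adjoint_lt_one hr0 hr1) (norm_mul_le_one_of_mem_unitary hU hP)
  ext x
  have hD_adjoint : D (adjoint U (U (P x))) = (r : 𝕜) • adjoint U (U (P x)) := by
    rw [adjoint_U_apply, hDP_apply (hPP x)]
  simp only [comp_apply, mul_apply_eq_comp, smul_apply, hUPx]
  exact liftDefect_apply_eq_smul_adjoint_apply hr0.ne' hF hV hU hD hlift (hDP_apply (hUPx x))
    hD_adjoint

/-- With `X` the lift defect, `X U P = r³ F⁻* (X U P) (U* P)`, which is a strict contraction in
`X U P`. -/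
lemma liftDefect_comp_eq_zero_of_adjoint_invariant (hr0 : 0 < r) (hr1 : r < 1)
    (hF : MemPickAnnulus r F F') (hV : ∀ x, ‖V x‖ = ‖x‖) (hU : U ∈ unitary (H →L[𝕜] H))
    (hD : IsSelfAdjoint D) (hlift : V ∘L (U * D) = F ∘L V) (hP : IsStarProjection P)
    (hDP : D * P = (r : 𝕜)⁻¹ • P) (hUP : P * adjoint U * P = adjoint U * P) :
    liftDefect V (U * D) F ∘L (U * P) = 0 := by
  have hr : (r : 𝕜) ≠ 0 := RCLike.ofReal_ne_zero.mpr hr0.ne'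
  have hDP_apply {x : H} (hx : P x = x) : D x = ((r⁻¹ : ℝ) : 𝕜) • x := by
    simpa only [mul_apply_eq_comp, smul_apply, hx, RCLike.ofReal_inv] using congr($hDP x)
  have hPP (x : H) : P (P x) = P x := congr($(hP.isIdempotentElem) x)
  have hUPx (x : H) : P (adjoint U (P x)) = adjoint U (P x) := congr($hUP x)
  have U_adjoint_apply (x : H) : U (adjoint U x) = x := congr($(Unitary.mul_star_self_of_mem hU) x)
  refine eq_zero_of_eq_comp_comp (B := adjoint U * P) ?_
    (hF.symm.norm_pow_three_smul_adjoint_lt_one hr0 hr1)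
    (norm_mul_le_one_of_mem_unitary (Unitary.star_mem hU) hP)
  ext x
  have key := liftDefect_apply_eq_smul_adjoint_apply (inv_ne_zero hr0.ne') hF.inv hV hU hD hlift
    (hDP_apply (hPP x)) (hDP_apply (hUPx x))
  simp only [comp_apply, mul_apply_eq_comp, smul_apply, hUPx, U_adjoint_apply]
  rw [key, map_smul, hF.symm.adjoint_apply_inv_adjoint_apply, smul_smul, RCLike.ofReal_inv,
    inv_pow, mul_inv_cancel₀ (pow_ne_zero 3 hr), one_smul]

lemma liftDefect_mul_radialPart_eq_zero (hr0 : 0 < r) (hr1 : r < 1)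
    (hF : MemPickAnnulus r F F') (hV : ∀ x, ‖V x‖ = ‖x‖) (hU : U ∈ unitary (H →L[𝕜] H))
    (hP : IsStarProjection P) (hUP : (1 - P) * U * P = 0)
    (hlift : V ∘L (U * radialPart 𝕜 r P) = F ∘L V) :
    liftDefect V (U * radialPart 𝕜 r P) F = 0 := by
  set X := liftDefect V (U * radialPart 𝕜 r P) F
  have hD := isSelfAdjoint_radialPart 𝕜 r hP.isSelfAdjoint
  have invariant : P * U * P = U * P := by
    rw [sub_mul, sub_mul, one_mul, sub_eq_zero] at hUP
    exact hUP.symm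
  have adjoint_invariant : (1 - P) * adjoint U * (1 - P) = adjoint U * (1 - P) := by
    have : P * adjoint U * (1 - P) = 0 := by
      simpa only [star_mul, star_zero, hP.isSelfAdjoint.star_eq, hP.one_sub.isSelfAdjoint.star_eq,
        star_eq_adjoint, mul_assoc] using congrArg star hUP
    rw [sub_mul, sub_mul, this, one_mul, sub_zero]
  have comp_plus : X ∘L (U * P) = 0 :=
    liftDefect_comp_eq_zero_of_invariant hr0 hr1 hF hV hU hD hlift hP
      (radialPart_mul_self 𝕜 r hP.isIdempotentElem) invariant
  have comp_minus : X ∘L (U * (1 - P)) = 0 :=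
    liftDefect_comp_eq_zero_of_adjoint_invariant hr0 hr1 hF hV hU hD hlift hP.one_sub
      (radialPart_mul_one_sub 𝕜 r hP.isIdempotentElem) adjoint_invariant
  have comp_U : X ∘L U = 0 := by
    calc X ∘L U = X ∘L (U * P) + X ∘L (U * (1 - P)) := by
          rw [← comp_add, ← mul_add, add_sub_cancel, mul_one]
      _ = 0 := by rw [comp_plus, comp_minus, add_zero]
  calc X = X ∘L U ∘L adjoint U := by
        rw [← mul_def, ← star_eq_adjoint, Unitary.mul_star_self_of_mem hU]
        rfl
    _ = 0 := by rw [← comp_assoc, comp_U, zero_comp]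

end Extremality

theorem pa_script_extremal_general {𝕜 H K : Type*} [RCLike 𝕜]
    [NormedAddCommGroup H] [InnerProductSpace 𝕜 H] [CompleteSpace H]
    [NormedAddCommGroup K] [InnerProductSpace 𝕜 K] [CompleteSpace K]
    {r : ℝ} (hr0 : 0 < r) (hr1 : r < 1)
    {U P : H →L[𝕜] H} (hU : U ∈ unitary (H →L[𝕜] H)) (hP : IsStarProjection P)
    (hUP : (1 - P) * U * P = 0)
    {F F' : K →L[𝕜] K} (hF : MemPickAnnulus r F F')
    {V : H →L[𝕜] K} (hV : ∀ x, ‖V x‖ = ‖x‖) (hlift : V ∘L (U * radialPart 𝕜 r P) = F ∘L V) :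
    (∀ y ∈ Set.range V, F y ∈ Set.range V) ∧
      (∀ y ∈ Set.range V, adjoint F y ∈ Set.range V) := by
  have hX := liftDefect_mul_radialPart_eq_zero hr0 hr1 hF hV hU hP hUP hlift
  constructor
  · rintro _ ⟨x, rfl⟩
    exact ⟨(U * radialPart 𝕜 r P) x, congr($hlift x)⟩
  · rintro _ ⟨x, rfl⟩
    exact ⟨adjoint (U * radialPart 𝕜 r P) x, congr($(sub_eq_zero.mp hX) x).symm⟩

/-- Every element of `𝒫𝔸_r` is extremal in the Agler sense: if `J ∈ 𝒫𝔸_r[H]` lifts to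
`F ∈ ℙ𝔸_r[K]` via an isometry `V` (so `V J = F V`), then the range of `V` reduces `F`. -/
theorem pa_script_extremal {H K : Type*}
    [NormedAddCommGroup H] [InnerProductSpace ℂ H] [CompleteSpace H]
    [NormedAddCommGroup K] [InnerProductSpace ℂ K] [CompleteSpace K]
    (r : ℝ) (hr0 : 0 < r) (hr1 : r < 1)
    (J : H →L[ℂ] H) (hJ : memPAscript r J)
    (F F' : K →L[ℂ] K) (hFinv : F * F' = 1) (hFinv' : F' * F = 1)
    (hFpick : (((r⁻¹ ^ 2 + r ^ 2 : ℝ) : ℂ) • (1 : K →L[ℂ] K)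
      - adjoint F * F - adjoint F' * F').IsPositive)
    (V : H →L[ℂ] K) (hV : ∀ x, ‖V x‖ = ‖x‖)
    (hlift : V ∘L J = F ∘L V) :
    (∀ y ∈ Set.range V, F y ∈ Set.range V) ∧
      (∀ y ∈ Set.range V, adjoint F y ∈ Set.range V) := by
  obtain ⟨P, Pm, U, hP, -, hsum, hU, hU', hUP, rfl⟩ := hJ
  obtain rfl : Pm = 1 - P := eq_sub_of_add_eq' hsum
  exact pa_script_extremal_general hr0 hr1 (Unitary.mem_iff.mpr ⟨hU, hU'⟩) ⟨hP.2, hP.1⟩ hUP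
    ⟨hFinv, hFinv', hFpick⟩ hV hlift

end
end

section
/- Let n be a positive integer and let T be an n × n complex matrix with operator norm ‖T‖ < 1. Then there exist an open set Ω ⊆ ℂ containing the closed unit disc and an analytic function F : Ω → M_n(ℂ) such that F(0) = T and F(ζ)* F(ζ) = I for every ζ with |ζ| = 1 (F is unitary valued on the unit circle). -/
open ContinuousLinearMap

noncomputable section

/-!
Nelson's proof diagonalizes `T` by a singular value decomposition and applies a Möbius map to each
singular value. An operator Möbius map avoids the decomposition and works in every unital
C⋆-algebra. With `D = √(1 - T⋆T)` and `E = √(1 - TT⋆)`, the block matrix `[T, E; D, -T⋆]` is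
unitary, because `T D = E T`. If `X = (1 + z T⋆)⁻¹ D` and `F(z) = T + z E X`, it maps `(1, z X)` to
`(F(z), X)`. Comparing lengths, `1 + |z|² X⋆X = F(z)⋆F(z) + X⋆X`, so `F(z)⋆F(z) = 1` when
`|z| = 1`. Since `F(z)⋆` is the value at `z̄` of the map built from `T⋆`, also `F(z)F(z)⋆ = 1`.
-/

section SquareRoot

variable {A : Type*} [NonUnitalCStarAlgebra A] [PartialOrder A] [StarOrderedRing A] {p q x z : A}

theorem mul_eq_zero_of_mul_add_mul_eq_zero (hp : 0 ≤ p) (hq : 0 ≤ q) (h : q * z + z * p = 0) :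
    z * p = 0 := by
  have hzp : star z * z * p = -(star z * q * z) := by
    rw [mul_assoc, eq_neg_of_add_eq_zero_right h, mul_neg, mul_assoc]
  have hcomm : Commute (star z * z) p := by
    rw [(IsSelfAdjoint.star_mul_self z).commute_iff (.of_nonneg hp), hzp]
    exact (IsSelfAdjoint.of_nonneg (star_left_conjugate_nonneg hq z)).neg
  have hzero : star z * z * p = 0 := by
    refine le_antisymm ?_ (hcomm.mul_nonneg (star_mul_self_nonneg z) hp)
    rw [hzp]
    exact neg_nonpos.2 (star_left_conjugate_nonneg hq z)
  rw [← CStarRing.star_mul_self_eq_zero_iff, star_mul, mul_assoc, ← mul_assoc (star z), hzero,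
    mul_zero]

theorem semiconjBy_of_semiconjBy_mul_self (hp : 0 ≤ p) (hq : 0 ≤ q)
    (h : SemiconjBy x (p * p) (q * q)) : SemiconjBy x p q := by
  set z := x * p - q * x with hz
  have hsylvester : q * z + z * p = 0 := by
    linear_combination (norm := (simp only [hz]; noncomm_ring)) h.eq
  have hzp : z * p = 0 := mul_eq_zero_of_mul_add_mul_eq_zero hp hq hsylvester
  have hqz : q * z = 0 := by rwa [hzp, add_zero] at hsylvester
  have hpz : p * star z = 0 := by
    simpa only [star_mul, star_zero, (IsSelfAdjoint.of_nonneg hp).star_eq] using congrArg star hzp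
  have hzq : star z * q = 0 := by
    simpa only [star_mul, star_zero, (IsSelfAdjoint.of_nonneg hq).star_eq] using congrArg star hqz
  have hzz : z * star z = -(q * x * star z) := by
    nth_rewrite 1 [hz]
    rw [sub_mul, mul_assoc x, hpz, mul_zero, zero_sub]
  have hzzz : star z * (z * star z) = 0 := by
    rw [hzz, mul_neg, mul_assoc q, ← mul_assoc, hzq, zero_mul, neg_zero]
  have hz0 : z * star z = 0 := by
    rw [← CStarRing.star_mul_self_eq_zero_iff, star_mul, star_star, mul_assoc, hzzz, mul_zero]
  exact sub_eq_zero.1 (CStarRing.mul_star_self_eq_zero_iff z |>.1 hz0)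

theorem semiconjBy_sqrt (hp : 0 ≤ p) (hq : 0 ≤ q) (h : SemiconjBy x p q) :
    SemiconjBy x (CFC.sqrt p) (CFC.sqrt q) :=
  semiconjBy_of_semiconjBy_mul_self (CFC.sqrt_nonneg p) (CFC.sqrt_nonneg q) <| by
    rwa [CFC.sqrt_mul_sqrt_self p, CFC.sqrt_mul_sqrt_self q]

end SquareRoot

section Defect

variable {A : Type*} [CStarAlgebra A] [PartialOrder A] [StarOrderedRing A] {a : A}

/-- The defect operator `√(1 - a⋆a)` of a contraction `a`, which measures how far `a` is from
being isometric. When `‖a‖ > 1` it is the junk value `0`. -/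
def defect (a : A) : A := CFC.sqrt (1 - star a * a)

theorem isSelfAdjoint_defect (a : A) : IsSelfAdjoint (defect a) :=
  .of_nonneg (CFC.sqrt_nonneg _)

theorem one_sub_star_mul_self_nonneg (ha : ‖a‖ ≤ 1) : 0 ≤ 1 - star a * a := by
  rw [sub_nonneg, ← CStarAlgebra.norm_le_one_iff_of_nonneg _ (star_mul_self_nonneg a),
    CStarRing.norm_star_mul_self]
  exact mul_le_one₀ ha (norm_nonneg a) ha

theorem defect_mul_defect (ha : ‖a‖ ≤ 1) : defect a * defect a = 1 - star a * a :=
  CFC.sqrt_mul_sqrt_self _ (one_sub_star_mul_self_nonneg ha)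

theorem mul_defect (ha : ‖a‖ ≤ 1) : a * defect a = defect (star a) * a :=
  semiconjBy_sqrt (one_sub_star_mul_self_nonneg ha)
    (one_sub_star_mul_self_nonneg (by rwa [norm_star]))
    (show a * (1 - star a * a) = (1 - star (star a) * star a) * a by
      rw [star_star]; noncomm_ring)

end Defect

-- The hypotheses say that `[a, e; d, -a⋆]` is isometric and maps `(1, w)` to `(a + e w, x)`.
theorem star_mul_self_add_star_mul_self {R : Type*} [Ring R] [StarRing R] {a d e w x : R}
    (hd : IsSelfAdjoint d) (he : IsSelfAdjoint e) (hdd : d * d = 1 - star a * a)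
    (hee : e * e = 1 - a * star a) (hade : a * d = e * a) (hx : x = d - star a * w) :
    star (a + e * w) * (a + e * w) + star x * x = 1 + star w * w := by
  have hdae : d * star a = star a * e := by
    simpa only [star_mul, hd.star_eq, he.star_eq] using congrArg star hade
  rw [hx]
  simp only [star_add, star_sub, star_mul, star_star, hd.star_eq, he.star_eq]
  linear_combination (norm := noncomm_ring) hdd + star w * hee * w - star w * hade - hdae * w

theorem isUnit_one_add_smul {𝕜 R : Type*} [NormedField 𝕜] [NormedRing R]
    [HasSummableGeomSeries R] [NormedAlgebra 𝕜 R] {c : 𝕜} {b : R} (h : ‖c‖ * ‖b‖ < 1) :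
    IsUnit (1 + c • b) := by
  rw [← sub_neg_eq_add]
  exact isUnit_one_sub_of_norm_lt_one (by rwa [norm_neg, norm_smul])

section Moebius

variable {A : Type*} [CStarAlgebra A] [PartialOrder A] [StarOrderedRing A] {a : A} {z : ℂ}

/-- The operator Möbius map `z ↦ a + z √(1 - aa⋆) (1 + z a⋆)⁻¹ √(1 - a⋆a)` of a contraction `a`;
for scalar `a` it is `(a + z) / (1 + z a⋆)`. Where `1 + z a⋆` is not invertible, its `Ring.inverse`
is `0`. -/
def moebius (a : A) (z : ℂ) : A :=
  a + z • (defect (star a) * Ring.inverse (1 + z • star a) * defect a)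

theorem moebius_zero (a : A) : moebius a 0 = a := by
  rw [moebius, zero_smul, add_zero]

theorem star_moebius (a : A) (z : ℂ) : star (moebius a z) = moebius (star a) (star z) := by
  simp only [moebius, star_add, star_smul, star_mul, ← Ring.inverse_star, star_one, star_star,
    (isSelfAdjoint_defect _).star_eq, mul_assoc]

theorem analyticAt_moebius (h : IsUnit (1 + z • star a)) : AnalyticAt ℂ (moebius a) z := by
  have hinv : AnalyticAt ℂ (fun w : ℂ ↦ Ring.inverse (1 + w • star a)) z :=
    AnalyticAt.comp (g := Ring.inverse) (analyticAt_inverse h.unit) (by fun_prop)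
  unfold moebius
  fun_prop

theorem star_moebius_mul_moebius (ha : ‖a‖ < 1) (hz : ‖z‖ = 1) :
    star (moebius a z) * moebius a z = 1 := by
  have hunit : IsUnit (1 + z • star a) := isUnit_one_add_smul (by rwa [hz, one_mul, norm_star])
  set x := Ring.inverse (1 + z • star a) * defect a with hx
  have hmoebius : moebius a z = a + defect (star a) * (z • x) := by
    rw [moebius, hx, mul_smul_comm, mul_assoc]
  have hx_eq : x = defect a - star a * (z • x) := by
    rw [eq_sub_iff_add_eq, mul_smul_comm, ← smul_mul_assoc, ← one_add_mul, hx,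
      Ring.mul_inverse_cancel_left _ _ hunit]
  have hdefect_star : defect (star a) * defect (star a) = 1 - a * star a := by
    rw [defect_mul_defect ((norm_star a).trans_le ha.le), star_star]
  have hlength := star_mul_self_add_star_mul_self (isSelfAdjoint_defect a)
    (isSelfAdjoint_defect (star a)) (defect_mul_defect ha.le) hdefect_star (mul_defect ha.le) hx_eq
  have hsmul : star (z • x) * (z • x) = star x * x := by
    rw [star_smul, smul_mul_smul_comm, Complex.star_def, Complex.conj_mul', hz, Complex.ofReal_one,
      one_pow, one_smul]
  rw [hsmul] at hlength
  rw [hmoebius]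
  exact add_right_cancel hlength

theorem moebius_mem_unitary (ha : ‖a‖ < 1) (hz : ‖z‖ = 1) : moebius a z ∈ unitary A := by
  refine Unitary.mem_iff.2 ⟨star_moebius_mul_moebius ha hz, ?_⟩
  have hcoisometry := star_moebius_mul_moebius (a := star a) (z := star z)
    (by rwa [norm_star]) (by rwa [norm_star])
  rwa [← star_moebius, star_star] at hcoisometry

end Moebius

theorem nelson_trick_general {A : Type*} [CStarAlgebra A] (a : A) (ha : ‖a‖ < 1) :
    ∃ Ω : Set ℂ, IsOpen Ω ∧ Metric.closedBall (0 : ℂ) 1 ⊆ Ω ∧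
      ∃ F : ℂ → A, AnalyticOnNhd ℂ F Ω ∧ F 0 = a ∧ ∀ ζ : ℂ, ‖ζ‖ = 1 → F ζ ∈ unitary A := by
  let _ := CStarAlgebra.spectralOrder A
  have _ := CStarAlgebra.spectralOrderedRing A
  refine ⟨{z | ‖z‖ * ‖a‖ < 1}, isOpen_lt (by fun_prop) continuous_const, fun z hz ↦ ?_,
    moebius a, fun z hz ↦ ?_, moebius_zero a, fun ζ hζ ↦ moebius_mem_unitary ha hζ⟩
  · exact mul_lt_one_of_nonneg_of_lt_one_right (mem_closedBall_zero_iff.1 hz) (norm_nonneg a) ha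
  · exact analyticAt_moebius (isUnit_one_add_smul (by rwa [norm_star]))

/-- Nelson's trick: a strict contraction `T` on `ℂⁿ` extends to a function `F`, analytic
on an open neighborhood `Ω` of the closed unit disc, with `F(0) = T` and `F` unitary
valued on the unit circle. -/
theorem nelson_trick (n : ℕ) (hn : 0 < n)
    (T : EuclideanSpace ℂ (Fin n) →L[ℂ] EuclideanSpace ℂ (Fin n)) (hT : ‖T‖ < 1) :
    ∃ Ω : Set ℂ, IsOpen Ω ∧ Metric.closedBall (0 : ℂ) 1 ⊆ Ω ∧
      ∃ F : ℂ → (EuclideanSpace ℂ (Fin n) →L[ℂ] EuclideanSpace ℂ (Fin n)),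
        AnalyticOnNhd ℂ F Ω ∧ F 0 = T ∧
        ∀ ζ : ℂ, ‖ζ‖ = 1 → adjoint (F ζ) * F ζ = 1 := by
  obtain ⟨Ω, hΩ, hball, F, hF, hF0, hunitary⟩ := nelson_trick_general T hT
  exact ⟨Ω, hΩ, hball, F, hF, hF0, fun ζ hζ ↦ Unitary.star_mul_self_of_mem (hunitary ζ hζ)⟩

end
end

section
/- Let n and g be positive integers and let T₁, …, T_g be n × n complex matrices such that the row matrix (T₁ ⋯ T_g) is a strict contraction, i.e., ‖T₁T₁* + ⋯ + T_gT_g*‖ < 1. Then there exist an open set Ω ⊆ ℂ containing the closed unit disc and analytic functions F₁, …, F_g : Ω → M_n(ℂ) such that F_j(0) = T_j for each j and F₁(ζ)F₁(ζ)* + ⋯ + F_g(ζ)F_g(ζ)* = I for every ζ with |ζ| = 1 (the row (F₁(ζ) ⋯ F_g(ζ)) is a coisometry on the unit circle). -/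
open ContinuousLinearMap

noncomputable section

/-!
Write `T` for the row, `D = (1 - T T*)^{1/2}`, and let `(p, q)` be the row `(1, X)` multiplied on
the right by Halmos' hyperbolic unitary

  `[ D⁻¹      D⁻¹ T            ]`
  `[ T* D⁻¹   (1 - T* T)^{-1/2} ]`.

This matrix preserves the indefinite form `x x* - y y*`, so `p p* - q q* = 1 - X X*`. Hence
`p⁻¹ q` is a coisometry whenever `X` is, and it equals `T` at `X = 0`. Taking `X = ζ V` for a fixed
coordinate row `V` gives the required function of `ζ`: there `p = (1 + ζ V T*) D⁻¹` is
invertible on a neighborhood of the closed disc because `‖V T*‖ < 1`.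
-/

open scoped Matrix Ring

section StarRing

variable {ι R : Type*} [Fintype ι] [Ring R] [StarRing R]

theorem add_smul_dotProduct_star_add_smul (X T : ι → R) (a : R) :
    (X + a • T) ⬝ᵥ star (X + a • T) =
      X ⬝ᵥ star X + X ⬝ᵥ star T * star a + a * star (X ⬝ᵥ star T) +
        a * (T ⬝ᵥ star T) * star a := by
  have star_smul_row : star (a • T) = MulOpposite.op (star a) • star T := by
    ext j
    simp
  simp only [star_add, star_smul_row, dotProduct_add, add_dotProduct, smul_dotProduct,
    dotProduct_smul, ← Matrix.dotProduct_star, smul_eq_mul, MulOpposite.smul_eq_mul_unop,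
    MulOpposite.unop_op]
  noncomm_ring

theorem smul_dotProduct_star_smul (a : R) (x : ι → R) :
    (a • x) ⬝ᵥ star (a • x) = a * (x ⬝ᵥ star x) * star a := by
  simpa using add_smul_dotProduct_star_add_smul 0 x a

/-- `d` is an invertible defect operator `(1 - T T*)^{1/2}` of the row `T`. Invertibility of
`1 + d` replaces positivity, which is not available in a star ring. -/
structure IsRowDefect (T : ι → R) (d : R) : Prop where
  isSelfAdjoint : IsSelfAdjoint d
  isUnit : IsUnit d
  isUnit_one_add : IsUnit (1 + d)
  dotProduct_star_eq : T ⬝ᵥ star T = 1 - d * d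

/-- The denominator of the Möbius transform `rowMobius`: the first entry `(1 + X T*) D⁻¹` of the
row `(1, X)` times Halmos' hyperbolic unitary. -/
def rowMobiusDenom (T : ι → R) (d : R) (X : ι → R) : R :=
  (1 + X ⬝ᵥ star T) * d⁻¹ʳ

/-- The numerator of the Möbius transform `rowMobius`: the remaining entries
`D⁻¹ T + X (1 - T* T)^{-1/2}` of the row `(1, X)` times Halmos' hyperbolic unitary. The
identity `(1 - T* T)^{-1/2} = 1 + T* (D (1 + D))⁻¹ T` keeps all computations inside `R`. -/
def rowMobiusNum (T : ι → R) (d : R) (X : ι → R) : ι → R :=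
  X + (X ⬝ᵥ star T * (d * (1 + d))⁻¹ʳ + d⁻¹ʳ) • T

/-- The operator Möbius transform of the unit ball of rows which sends `0` to `T`, where `d` is
the defect operator of `T`. It is meaningful only where `rowMobiusDenom T d X` is invertible. -/
def rowMobius (T : ι → R) (d : R) (X : ι → R) : ι → R :=
  (rowMobiusDenom T d X)⁻¹ʳ • rowMobiusNum T d X

namespace IsRowDefect

variable {T : ι → R} {d : R}

theorem isUnit_mul_one_add (h : IsRowDefect T d) : IsUnit (d * (1 + d)) :=
  h.isUnit.mul h.isUnit_one_add

theorem isSelfAdjoint_mul_one_add (h : IsRowDefect T d) : IsSelfAdjoint (d * (1 + d)) := by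
  have := h.isSelfAdjoint.star_eq
  simp [IsSelfAdjoint, this, mul_add]

theorem inverse_mul_dotProduct_star_mul_inverse (h : IsRowDefect T d) :
    d⁻¹ʳ * (T ⬝ᵥ star T) * d⁻¹ʳ = d⁻¹ʳ * d⁻¹ʳ - 1 := by
  have hd := Ring.inverse_mul_cancel d h.isUnit
  have hd' := Ring.mul_inverse_cancel d h.isUnit
  rw [h.dotProduct_star_eq]
  linear_combination (norm := noncomm_ring) -(hd * (d * d⁻¹ʳ)) - hd'

theorem inverse_mul_one_add_mul_dotProduct_star (h : IsRowDefect T d) :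
    (d * (1 + d))⁻¹ʳ * (T ⬝ᵥ star T) = d⁻¹ʳ - 1 := by
  apply h.isUnit_mul_one_add.mul_left_cancel
  rw [Ring.mul_inverse_cancel_left _ _ h.isUnit_mul_one_add, h.dotProduct_star_eq]
  have hd := Ring.mul_inverse_cancel d h.isUnit
  linear_combination (norm := noncomm_ring) -hd - d * hd

theorem dotProduct_star_mul_inverse_mul_one_add (h : IsRowDefect T d) :
    (T ⬝ᵥ star T) * (d * (1 + d))⁻¹ʳ = d⁻¹ʳ - 1 := by
  simpa only [star_mul, star_sub, star_one, h.isSelfAdjoint.ringInverse.star_eq,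
    h.isSelfAdjoint_mul_one_add.ringInverse.star_eq, ← Matrix.dotProduct_star]
    using congr_arg star h.inverse_mul_one_add_mul_dotProduct_star

theorem inverse_mul_inverse_mul_one_add (h : IsRowDefect T d) :
    d⁻¹ʳ * (d * (1 + d))⁻¹ʳ = d⁻¹ʳ * d⁻¹ʳ - (d * (1 + d))⁻¹ʳ := by
  apply h.isUnit_mul_one_add.mul_right_cancel
  rw [Ring.inverse_mul_cancel_right _ _ h.isUnit_mul_one_add, sub_mul,
    Ring.inverse_mul_cancel _ h.isUnit_mul_one_add]
  have hd := Ring.inverse_mul_cancel d h.isUnit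
  linear_combination (norm := noncomm_ring) -(d⁻¹ʳ * hd) - d⁻¹ʳ * hd * d - hd

theorem rowMobiusDenom_mul_star_sub (h : IsRowDefect T d) (X : ι → R) :
    rowMobiusDenom T d X * star (rowMobiusDenom T d X) -
      rowMobiusNum T d X ⬝ᵥ star (rowMobiusNum T d X) = 1 - X ⬝ᵥ star X := by
  have star_c := h.isSelfAdjoint.ringInverse.star_eq
  have star_k := h.isSelfAdjoint_mul_one_add.ringInverse.star_eq
  have csc := h.inverse_mul_dotProduct_star_mul_inverse
  have ks := h.inverse_mul_one_add_mul_dotProduct_star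
  have sk := h.dotProduct_star_mul_inverse_mul_one_add
  have ck := h.inverse_mul_inverse_mul_one_add
  rw [rowMobiusNum, add_smul_dotProduct_star_add_smul, rowMobiusDenom]
  simp only [star_mul, star_add, star_one, star_c, star_k]
  set c := d⁻¹ʳ
  set k := (d * (1 + d))⁻¹ʳ
  set N := X ⬝ᵥ star T
  linear_combination (norm := noncomm_ring)
    -csc - N * ks * (k * star N + c) - c * sk * star N - N * ck * star N

theorem rowMobius_zero (h : IsRowDefect T d) : rowMobius T d 0 = T := by
  have hd : d⁻¹ʳ⁻¹ʳ * d⁻¹ʳ = 1 := Ring.inverse_mul_cancel _ h.isUnit.ringInverse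
  simp [rowMobius, rowMobiusDenom, rowMobiusNum, smul_smul, hd]

theorem isUnit_rowMobiusDenom (h : IsRowDefect T d) {X : ι → R}
    (hX : IsUnit (1 + X ⬝ᵥ star T)) : IsUnit (rowMobiusDenom T d X) :=
  hX.mul h.isUnit.ringInverse

theorem rowMobius_dotProduct_star_self (h : IsRowDefect T d) {X : ι → R}
    (hX : IsUnit (1 + X ⬝ᵥ star T)) (hXX : X ⬝ᵥ star X = 1) :
    rowMobius T d X ⬝ᵥ star (rowMobius T d X) = 1 := by
  have hpq := h.rowMobiusDenom_mul_star_sub X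
  rw [hXX, sub_self, sub_eq_zero] at hpq
  have hp := Ring.inverse_mul_cancel _ (h.isUnit_rowMobiusDenom hX)
  set p := rowMobiusDenom T d X
  calc rowMobius T d X ⬝ᵥ star (rowMobius T d X)
      = p⁻¹ʳ * (rowMobiusNum T d X ⬝ᵥ star (rowMobiusNum T d X)) * star p⁻¹ʳ :=
        smul_dotProduct_star_smul _ _
    _ = (p⁻¹ʳ * p) * star (p⁻¹ʳ * p) := by rw [← hpq, star_mul]; simp only [mul_assoc]
    _ = 1 := by rw [hp, star_one, one_mul]

end IsRowDefect

end StarRing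

section Analytic

variable {𝕜 E ι R : Type*} [NontriviallyNormedField 𝕜] [NormedAddCommGroup E] [NormedSpace 𝕜 E]
  [NormedRing R] [NormedAlgebra 𝕜 R]

theorem analyticAt_ringInverse_comp [HasSummableGeomSeries R] {f : E → R} {z : E}
    (hf : AnalyticAt 𝕜 f z) (hz : IsUnit (f z)) : AnalyticAt 𝕜 (fun w ↦ (f w)⁻¹ʳ) z := by
  obtain ⟨u, hu⟩ := hz
  exact AnalyticAt.comp (g := Ring.inverse) (hu ▸ analyticAt_inverse u) hf

variable [Fintype ι]

theorem analyticAt_dotProduct_const {X : E → ι → R} {z : E} (hX : AnalyticAt 𝕜 X z) (y : ι → R) :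
    AnalyticAt 𝕜 (fun w ↦ X w ⬝ᵥ y) z :=
  Finset.analyticAt_fun_sum _ fun i _ ↦ (analyticAt_pi_iff.1 hX i).mul analyticAt_const

theorem analyticAt_rowMobius [HasSummableGeomSeries R] [StarRing R] {T : ι → R} {d : R}
    (h : IsRowDefect T d) {X : E → ι → R} {z : E} (hX : AnalyticAt 𝕜 X z)
    (hz : IsUnit (1 + X z ⬝ᵥ star T)) (j : ι) :
    AnalyticAt 𝕜 (fun w ↦ rowMobius T d (X w) j) z := by
  have hN := analyticAt_dotProduct_const hX (star T)
  have hDenom : AnalyticAt 𝕜 (fun w ↦ rowMobiusDenom T d (X w)) z :=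
    (analyticAt_const.add hN).mul analyticAt_const
  have hNum : AnalyticAt 𝕜 (fun w ↦ rowMobiusNum T d (X w) j) z :=
    (analyticAt_pi_iff.1 hX j).add
      (((hN.mul analyticAt_const).add analyticAt_const).mul analyticAt_const)
  exact (analyticAt_ringInverse_comp hDenom (h.isUnit_rowMobiusDenom hz)).mul hNum

end Analytic

theorem isUnit_one_add_of_norm_lt_one {R : Type*} [NormedRing R] [HasSummableGeomSeries R] {x : R}
    (hx : ‖x‖ < 1) : IsUnit (1 + x) := by
  simpa using isUnit_one_sub_of_norm_lt_one (x := -x) (by rwa [norm_neg])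

section CStarAlgebra

variable {ι A : Type*} [Fintype ι]

theorem norm_sq_le_norm_dotProduct_star_self [NonUnitalCStarAlgebra A] (T : ι → A) (i : ι) :
    ‖T i‖ ^ 2 ≤ ‖T ⬝ᵥ star T‖ := by
  let _ := CStarAlgebra.spectralOrder A
  have := CStarAlgebra.spectralOrderedRing A
  have term_nonneg (j : ι) : 0 ≤ T j * star (T j) := mul_star_self_nonneg (T j)
  rw [sq, ← CStarRing.norm_self_mul_star]
  exact CStarAlgebra.norm_le_norm_of_nonneg_of_le (term_nonneg i)
    (Finset.single_le_sum (fun j _ ↦ term_nonneg j) (Finset.mem_univ i))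

variable [CStarAlgebra A]

theorem exists_isRowDefect {T : ι → A} (hT : ‖T ⬝ᵥ star T‖ < 1) : ∃ d, IsRowDefect T d := by
  let _ := CStarAlgebra.spectralOrder A
  have := CStarAlgebra.spectralOrderedRing A
  set S := T ⬝ᵥ star T
  have S_nonneg : 0 ≤ S := Finset.sum_nonneg fun j _ ↦ mul_star_self_nonneg (T j)
  have one_sub_nonneg : 0 ≤ 1 - S :=
    sub_nonneg.2 ((CStarAlgebra.norm_le_one_iff_of_nonneg S S_nonneg).1 hT.le)
  have sqrt_nonneg := CFC.sqrt_nonneg (1 - S)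
  exact ⟨CFC.sqrt (1 - S),
    { isSelfAdjoint := sqrt_nonneg.isSelfAdjoint
      isUnit := (CFC.isUnit_sqrt_iff _ one_sub_nonneg).2 (isUnit_one_sub_of_norm_lt_one hT)
      isUnit_one_add := CStarAlgebra.isUnit_of_le 1 (le_add_of_nonneg_right sqrt_nonneg)
      dotProduct_star_eq := by rw [CFC.sqrt_mul_sqrt_self _ one_sub_nonneg, sub_sub_cancel] }⟩

theorem nelson_trick_row_contraction_general [Nonempty ι] (T : ι → A)
    (hT : ‖∑ j, T j * star (T j)‖ < 1) :
    ∃ Ω : Set ℂ, IsOpen Ω ∧ Metric.closedBall (0 : ℂ) 1 ⊆ Ω ∧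
      ∃ F : ι → ℂ → A, (∀ j, AnalyticOnNhd ℂ (F j) Ω) ∧ (∀ j, F j 0 = T j) ∧
        ∀ ζ : ℂ, ‖ζ‖ = 1 → ∑ j, F j ζ * star (F j ζ) = 1 := by
  classical
  obtain ⟨i⟩ := ‹Nonempty ι›
  obtain ⟨d, hd⟩ := exists_isRowDefect hT
  let X (ζ : ℂ) : ι → A := ζ • Pi.single i 1
  let Ω : Set ℂ := {ζ | IsUnit (1 + X ζ ⬝ᵥ star T)}
  have X_analytic (ζ : ℂ) : AnalyticAt ℂ X ζ := analyticAt_id.smul analyticAt_const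
  have X_coisometry {ζ : ℂ} (hζ : ‖ζ‖ = 1) : X ζ ⬝ᵥ star (X ζ) = 1 := by
    simp [X, smul_smul, Complex.conj_mul', hζ]
  have dotProduct_X (ζ : ℂ) : X ζ ⬝ᵥ star T = ζ • star (T i) := by
    simp [X, smul_dotProduct]
  have norm_T_lt_one : ‖T i‖ < 1 :=
    (sq_lt_one_iff₀ (norm_nonneg _)).1 ((norm_sq_le_norm_dotProduct_star_self T i).trans_lt hT)
  have isOpen_Ω : IsOpen Ω := by
    simp only [Ω, dotProduct_X]
    exact Units.isOpen.preimage (by fun_prop : Continuous fun ζ : ℂ ↦ 1 + ζ • star (T i))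
  have closedBall_subset : Metric.closedBall (0 : ℂ) 1 ⊆ Ω := fun ζ hζ ↦ by
    apply isUnit_one_add_of_norm_lt_one
    rw [dotProduct_X, norm_smul, norm_star]
    exact mul_lt_one_of_nonneg_of_lt_one_right (by simpa using hζ) (norm_nonneg _) norm_T_lt_one
  refine ⟨Ω, isOpen_Ω, closedBall_subset, fun j ζ ↦ rowMobius T d (X ζ) j, ?_, ?_, ?_⟩
  · exact fun j ζ hζ ↦ analyticAt_rowMobius hd (X_analytic ζ) hζ j
  · simp [X, hd.rowMobius_zero]
  · exact fun ζ hζ ↦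
      hd.rowMobius_dotProduct_star_self (closedBall_subset (by simp [hζ])) (X_coisometry hζ)

end CStarAlgebra

/-- Nelson's trick for row contractions: if `(T₁ ⋯ T_g)` is a strict row contraction of
`n × n` matrices, there are functions `F₁, …, F_g`, analytic on an open neighborhood `Ω`
of the closed unit disc, with `F_j(0) = T_j` and such that `(F₁(ζ) ⋯ F_g(ζ))` is a
coisometry for every `ζ` on the unit circle. -/
theorem nelson_trick_row_contraction (n g : ℕ) (hn : 0 < n) (hg : 0 < g)
    (T : Fin g → (EuclideanSpace ℂ (Fin n) →L[ℂ] EuclideanSpace ℂ (Fin n)))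
    (hT : ‖∑ j, T j * adjoint (T j)‖ < 1) :
    ∃ Ω : Set ℂ, IsOpen Ω ∧ Metric.closedBall (0 : ℂ) 1 ⊆ Ω ∧
      ∃ F : Fin g → ℂ → (EuclideanSpace ℂ (Fin n) →L[ℂ] EuclideanSpace ℂ (Fin n)),
        (∀ j, AnalyticOnNhd ℂ (F j) Ω) ∧ (∀ j, F j 0 = T j) ∧
        ∀ ζ : ℂ, ‖ζ‖ = 1 → ∑ j, F j ζ * adjoint (F j ζ) = 1 := by
  have : Nonempty (Fin g) := ⟨⟨0, hg⟩⟩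
  exact nelson_trick_row_contraction_general T hT

end
end

section
/- Let n and d be positive integers and let T₁, …, T_d be invertible n × n complex matrices with ‖T_j‖ < 1 for each j, which pairwise doubly commute: T_jT_k = T_kT_j for all j, k and T_j*T_k = T_kT_j* for all j ≠ k. Then there exist an open set Ω ⊆ ℂ containing the closed unit disc and analytic functions F₁, …, F_d : Ω → M_n(ℂ) such that: F_j(0) = T_j for each j; F_j(ζ) is unitary for every ζ with |ζ| = 1; and for all j ≠ k and all z, w ∈ Ω, F_j(z)F_k(w) = F_k(w)F_j(z) and F_j(z)*F_k(w) = F_k(w)F_j(z)* (the functions pointwise doubly commute). -/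
open ContinuousLinearMap

noncomputable section

/-!
For a single invertible strict contraction, write `T = U P` with `P = |T|` and `U` unitary. Each
point `p` of the spectrum of `P` lies in `(0, 1)`, and `z ↦ (p + z) / (1 + z p)` is a disc
automorphism taking `0` to `p`; hence `F(z) = U (P + z) (1 + z P)⁻¹` is analytic on
`‖z‖ < 1 / ‖T‖`, equals `T` at `0` and is unitary on the unit circle.

Everything that commutes with both `T` and `T*` commutes with `P`, hence with `F(z)`, so double
commutation passes from the operators to the functions, one argument at a time.
-/

open scoped NNReal Ring

/-- Double commutation: `b` commutes with both `a` and `star a`. Despite its shape, the relation is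
symmetric. -/
def DoublyCommute {R : Type*} [Mul R] [Star R] (a b : R) : Prop :=
  Commute a b ∧ Commute (star a) b

namespace DoublyCommute

variable {R : Type*} [Mul R] [StarMul R] {a b : R}

lemma commute_star_right (h : DoublyCommute a b) : Commute a (star b) := by
  simpa only [star_star] using h.2.star_star

lemma symm (h : DoublyCommute a b) : DoublyCommute b a :=
  ⟨h.1.symm, h.commute_star_right.symm⟩

end DoublyCommute

lemma commute_ringInverse_right {M₀ : Type*} [MonoidWithZero M₀] {x a : M₀} (h : Commute x a) :
    Commute x a⁻¹ʳ := by
  by_cases ha : IsUnit a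
  · lift a to M₀ˣ using ha
    rw [Ring.inverse_unit]
    exact h.units_inv_right
  · rw [Ring.inverse_non_unit a ha]
    exact Commute.zero_right x

lemma mul_ringInverse_mem_unitary_iff {R : Type*} [MonoidWithZero R] [StarMul R] {a b : R}
    (ha : IsUnit a) (hb : IsUnit b) :
    a * b⁻¹ʳ ∈ unitary R ↔ star a * a = star b * b := by
  lift a to Rˣ using ha
  lift b to Rˣ using hb
  rw [Ring.inverse_unit, Units.mul_inv_mem_unitary, Units.ext_iff]
  rfl

section Blaschke

variable {𝕜 A : Type*} [CommSemiring 𝕜] [Semiring A] [Algebra 𝕜 A]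

/-- The operator Blaschke factor `(P + z) (1 + z P)⁻¹`, as a function of `z`: for a real scalar
`P = p` in `(-1, 1)` it is the disc automorphism `z ↦ (p + z) / (1 + z p)`. It has the junk value
`0` where `1 + z P` is not invertible. -/
def blaschke (P : A) (z : 𝕜) : A :=
  (P + algebraMap 𝕜 A z) * (1 + z • P)⁻¹ʳ

variable (𝕜) in
lemma blaschke_zero (P : A) : blaschke P (0 : 𝕜) = P := by
  simp [blaschke]

lemma commute_blaschke {x P : A} (h : Commute x P) (z : 𝕜) : Commute x (blaschke P z) :=
  (h.add_right (Algebra.commutes z x).symm).mul_right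
    (commute_ringInverse_right ((Commute.one_right x).add_right (h.smul_right z)))

lemma blaschke_mem_unitary [StarRing 𝕜] [StarRing A] [StarModule 𝕜 A] {P : A}
    (hP : IsSelfAdjoint P) {z : 𝕜} (hz : z ∈ unitary 𝕜) (hden : IsUnit (1 + z • P)) :
    blaschke P z ∈ unitary A := by
  have hstar : star (1 + z • P) = 1 + star z • P := by
    rw [star_add, star_one, star_smul, hP.star_eq]
  have hnormal : Commute (1 + z • P) (star (1 + z • P)) := by
    rw [hstar]
    exact (Commute.one_left _).add_left
      ((Commute.one_right _).add_right (((Commute.refl P).smul_right _).smul_left _))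
  have hnum : P + algebraMap 𝕜 A z = z • star (1 + z • P) := by
    rw [hstar, smul_add, smul_smul, Unitary.mul_star_self_of_mem hz, one_smul,
      ← Algebra.algebraMap_eq_smul_one, add_comm]
  have hnum_unit : IsUnit (z • star (1 + z • P)) := by
    have hz_unit : IsUnit z := Unitary.isUnit_coe (U := ⟨z, hz⟩)
    rw [Algebra.smul_def]
    exact (hz_unit.map (algebraMap 𝕜 A)).mul hden.star
  rw [blaschke, hnum, mul_ringInverse_mem_unitary_iff hnum_unit hden, star_smul, star_star,
    smul_mul_smul_comm, Unitary.star_mul_self_of_mem hz, one_smul, hnormal.eq]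

end Blaschke

lemma isUnit_one_add_smul_s17 {𝕜 A : Type*} [NormedField 𝕜] [NormedRing A] [NormedAlgebra 𝕜 A]
    [CompleteSpace A] {P : A} {z : 𝕜} (h : ‖z‖ * ‖P‖ < 1) : IsUnit (1 + z • P) := by
  rw [← sub_neg_eq_add]
  exact isUnit_one_sub_of_norm_lt_one (by rwa [norm_neg, norm_smul])

lemma analyticAt_blaschke {𝕜 A : Type*} [NontriviallyNormedField 𝕜] [NormedRing A]
    [NormedAlgebra 𝕜 A] [CompleteSpace A] {P : A} {z : 𝕜} (h : ‖z‖ * ‖P‖ < 1) :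
    AnalyticAt 𝕜 (blaschke P) z := by
  have hnum : AnalyticAt 𝕜 (fun w : 𝕜 => P + algebraMap 𝕜 A w) z := by
    simp only [Algebra.algebraMap_eq_smul_one]
    fun_prop
  have hden : AnalyticAt 𝕜 (fun w : 𝕜 => 1 + w • P) z := by fun_prop
  have hinv : AnalyticAt 𝕜 (Ring.inverse : A → A) (1 + z • P) :=
    analyticAt_inverse (isUnit_one_add_smul_s17 h).unit
  exact hnum.mul (AnalyticAt.fun_comp hinv hden)

section Nelson

variable {A : Type*} [CStarAlgebra A] [PartialOrder A] [StarOrderedRing A]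

/-- The unitary factor `U = T |T|⁻¹` in the polar decomposition `T = U |T|` of an invertible
element; it has the junk value `0` when `|T|` is not invertible. -/
def polarUnitary (T : A) : A := T * (CFC.abs T)⁻¹ʳ

lemma isUnit_cfcAbs {T : A} (hT : IsUnit T) : IsUnit (CFC.abs T) :=
  (CFC.isUnit_sqrt_iff _ (star_mul_self_nonneg T)).2 (hT.star.mul hT)

lemma polarUnitary_mul_abs {T : A} (hT : IsUnit T) : polarUnitary T * CFC.abs T = T :=
  Ring.inverse_mul_cancel_right _ _ (isUnit_cfcAbs hT)

lemma polarUnitary_mem_unitary {T : A} (hT : IsUnit T) : polarUnitary T ∈ unitary A := by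
  rw [polarUnitary, mul_ringInverse_mem_unitary_iff hT (isUnit_cfcAbs hT),
    (CFC.abs_nonneg T).star_eq, CFC.abs_mul_abs]

/-- Nelson's function `z ↦ U (P + z) (1 + z P)⁻¹`, where `T = U P` is the polar
decomposition of an invertible strict contraction: it takes the value `T` at `0` and is unitary on
the unit circle. -/
def nelsonFunction (T : A) (z : ℂ) : A := polarUnitary T * blaschke (CFC.abs T) z

lemma nelsonFunction_zero {T : A} (hT : IsUnit T) : nelsonFunction T 0 = T := by
  rw [nelsonFunction, blaschke_zero, polarUnitary_mul_abs hT]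

lemma analyticAt_nelsonFunction {T : A} {z : ℂ} (h : ‖z‖ * ‖T‖ < 1) :
    AnalyticAt ℂ (nelsonFunction T) z :=
  analyticAt_const.mul (analyticAt_blaschke (by rwa [CFC.norm_abs]))

lemma nelsonFunction_mem_unitary {T : A} (hT : IsUnit T) (hnorm : ‖T‖ < 1) {ζ : ℂ}
    (hζ : ‖ζ‖ = 1) : nelsonFunction T ζ ∈ unitary A := by
  have hζ_unitary : ζ ∈ unitary ℂ := by
    rw [Unitary.mem_iff_star_mul_self]
    simpa [hζ] using Complex.conj_mul' ζ
  have hden : IsUnit (1 + ζ • CFC.abs T) :=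
    isUnit_one_add_smul_s17 (by rwa [hζ, one_mul, CFC.norm_abs])
  exact mul_mem (polarUnitary_mem_unitary hT)
    (blaschke_mem_unitary (CFC.abs_nonneg T).isSelfAdjoint hζ_unitary hden)

lemma commute_nelsonFunction {x T : A} (h : Commute x T) (hstar : Commute x (star T)) (z : ℂ) :
    Commute x (nelsonFunction T z) := by
  have hstar_left : Commute T (star x) := by simpa only [star_star] using hstar.symm.star_star
  have habs : Commute x (CFC.abs T) := (h.symm.cfcAbs_left hstar_left).symm
  exact (h.mul_right (commute_ringInverse_right habs)).mul_right (commute_blaschke habs z)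

lemma DoublyCommute.nelsonFunction_right {a T : A} (h : DoublyCommute a T) (z : ℂ) :
    DoublyCommute a (nelsonFunction T z) :=
  ⟨commute_nelsonFunction h.1 h.commute_star_right z,
    commute_nelsonFunction h.2 h.1.star_star z⟩

lemma DoublyCommute.nelsonFunction {S T : A} (h : DoublyCommute S T) (z w : ℂ) :
    DoublyCommute (nelsonFunction S z) (nelsonFunction T w) :=
  ((h.nelsonFunction_right w).symm.nelsonFunction_right z).symm

end Nelson

theorem nelson_trick_doubly_commuting_general {A ι : Type*} [CStarAlgebra A] (T : ι → A)
    (hinv : ∀ j, IsUnit (T j)) {r : ℝ≥0} (hr : r < 1) (hnorm : ∀ j, ‖T j‖₊ ≤ r)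
    (hdc : Pairwise fun j k => DoublyCommute (T j) (T k)) :
    ∃ Ω : Set ℂ, IsOpen Ω ∧ Metric.closedBall (0 : ℂ) 1 ⊆ Ω ∧
      ∃ F : ι → ℂ → A,
        (∀ j, AnalyticOnNhd ℂ (F j) Ω) ∧ (∀ j, F j 0 = T j) ∧
        (∀ j, ∀ ζ : ℂ, ‖ζ‖ = 1 → F j ζ ∈ unitary A) ∧
        (∀ j k, j ≠ k → ∀ z ∈ Ω, ∀ w ∈ Ω, DoublyCommute (F j z) (F k w)) := by
  let _ := CStarAlgebra.spectralOrder A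
  have := CStarAlgebra.spectralOrderedRing A
  refine ⟨{z | ‖z‖ * r < 1}, isOpen_lt (by fun_prop) continuous_const, fun z hz => ?_,
    fun j => nelsonFunction (T j), fun j z hz => ?_, fun j => nelsonFunction_zero (hinv j),
    fun j ζ hζ => ?_, fun j k hjk z _ w _ => (hdc hjk).nelsonFunction z w⟩
  · exact mul_lt_one_of_nonneg_of_lt_one_right (mem_closedBall_zero_iff.1 hz) r.coe_nonneg hr
  · have hzT : ‖z‖ * ‖T j‖ ≤ ‖z‖ * r := mul_le_mul_of_nonneg_left (hnorm j) (norm_nonneg z)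
    exact analyticAt_nelsonFunction (hzT.trans_lt hz)
  · exact nelsonFunction_mem_unitary (hinv j) ((hnorm j).trans_lt hr) hζ

/-- Nelson's trick for doubly commuting tuples: if `T₁, …, T_d` are invertible strict
contractions on `ℂⁿ` that pairwise doubly commute, there are functions `F₁, …, F_d`,
analytic on an open neighborhood `Ω` of the closed unit disc, with `F_j(0) = T_j`,
`F_j` unitary valued on the unit circle, and the `F_j` pointwise doubly commuting. -/
theorem nelson_trick_doubly_commuting (n d : ℕ) (hn : 0 < n) (hd : 0 < d)
    (T : Fin d → (EuclideanSpace ℂ (Fin n) →L[ℂ] EuclideanSpace ℂ (Fin n)))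
    (hinv : ∀ j, IsUnit (T j)) (hnorm : ∀ j, ‖T j‖ < 1)
    (hcomm : ∀ j k, T j * T k = T k * T j)
    (hdcomm : ∀ j k, j ≠ k → adjoint (T j) * T k = T k * adjoint (T j)) :
    ∃ Ω : Set ℂ, IsOpen Ω ∧ Metric.closedBall (0 : ℂ) 1 ⊆ Ω ∧
      ∃ F : Fin d → ℂ → (EuclideanSpace ℂ (Fin n) →L[ℂ] EuclideanSpace ℂ (Fin n)),
        (∀ j, AnalyticOnNhd ℂ (F j) Ω) ∧ (∀ j, F j 0 = T j) ∧
        (∀ j, ∀ ζ : ℂ, ‖ζ‖ = 1 →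
          adjoint (F j ζ) * F j ζ = 1 ∧ F j ζ * adjoint (F j ζ) = 1) ∧
        (∀ j k, j ≠ k → ∀ z ∈ Ω, ∀ w ∈ Ω,
          F j z * F k w = F k w * F j z ∧
          adjoint (F j z) * F k w = F k w * adjoint (F j z)) := by
  have : Nonempty (Fin d) := ⟨⟨0, hd⟩⟩
  obtain ⟨i, hi⟩ := Finite.exists_max fun j => ‖T j‖₊
  exact nelson_trick_doubly_commuting_general T hinv (hnorm i) hi
    fun j k hjk => ⟨hcomm j k, hdcomm j k hjk⟩

end
end
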